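/- Combining the variational formula for relative entropy with the Golden–Thompson inequality: for a density operator ρ, a positive definite density operator σ, a self-adjoint X, and λ > 0, one has tr(ρX) ≤ (1/λ)·D(ρ‖σ) + (1/λ)·log tr(σ·e^{λX}). -/

import Mathlib

open Matrix
open scoped ComplexOrder

/-- Matrix logarithm via the continuous functional calculus (with `Real.log 0 = 0`,
implementing the convention `0·log 0 = 0` on the kernel). -/
noncomputable def mlog {n : ℕ} (M : Matrix (Fin n) (Fin n) ℂ) : Matrix (Fin n) (Fin n) ℂ :=
  cfc Real.log M

/-- Matrix exponential of a Hermitian matrix via the continuous functional calculus. -/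
noncomputable def mexp {n : ℕ} (M : Matrix (Fin n) (Fin n) ℂ) : Matrix (Fin n) (Fin n) ℂ :=
  cfc Real.exp M

/-- Umegaki relative entropy `D(ρ‖σ) = tr(ρ(log ρ − log σ))`. -/
noncomputable def relEnt {n : ℕ} (ρ σ : Matrix (Fin n) (Fin n) ℂ) : ℝ :=
  ((ρ * (mlog ρ - mlog σ)).trace).re

lemma vgt_log_tendsto (a b : ℝ) (hb : 0 < b) :
    Filter.Tendsto (fun t : ℝ => Real.log (a + t * b) - Real.log t) Filter.atTop
      (nhds (Real.log b)) := by
  have h1 : Filter.Tendsto (fun t : ℝ => a / t + b) Filter.atTop (nhds (0 + b)) :=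
    (Filter.Tendsto.const_div_atTop Filter.tendsto_id a).add tendsto_const_nhds
  rw [zero_add] at h1
  have h2 := h1.log hb.ne'
  refine h2.congr' ?_
  have h3 : ∀ᶠ t : ℝ in Filter.atTop, 0 < a / t + b := h1.eventually (lt_mem_nhds hb)
  filter_upwards [h3, Filter.eventually_gt_atTop 0] with t ht ht0
  have : a + t * b = t * (a / t + b) := by field_simp
  rw [this, Real.log_mul ht0.ne' ht.ne']
  ring

lemma vgt_real {ι : Type*} [Fintype ι] (w : ι → ι → ℝ) (p q r s y : ι → ℝ)
    (hp : ∀ i, 0 ≤ p i) (hq : ∀ j, 0 < q j)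
    (hw1 : ∑ i, ∑ j, w i j * p i = 1) (hr1 : ∑ k, r k = 1)
    (hyp : ∀ t : ℝ, 0 ≤ t → ∀ κ : ι → ℝ,
      ∑ k, (2 * r k * κ k - κ k ^ 2 * (s k + t * r k)) ≤
        ∑ i, ∑ j, w i j * (p i * (p i / (q j + t * p i)))) :
    ∑ k, r k * y k + 1 ≤
      ∑ i, ∑ j, w i j * (p i * (Real.log (p i) - Real.log (q j))) + ∑ k, s k * Real.exp (y k) := by
  set a : ι → ℝ := fun k => Real.exp (- y k) with ha
  have hapos : ∀ k, 0 < a k := fun k => Real.exp_pos _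
  set G : ℝ → ℝ := fun t => ∑ i, ∑ j, w i j * (p i * Real.log (q j + t * p i)) -
    ∑ k, (r k * (Real.log (a k + t * 1) - a k * (a k + t * 1)⁻¹) + s k * (a k + t * 1)⁻¹) with hG
  set G' : ℝ → ℝ := fun t => ∑ i, ∑ j, w i j * (p i * (p i / (q j + t * p i))) -
    ∑ k, (2 * r k * (a k + t)⁻¹ - ((a k + t)⁻¹) ^ 2 * (s k + t * r k)) with hG'
  have hder : ∀ t : ℝ, 0 ≤ t → HasDerivAt G (G' t) t := by
    intro t ht
    have e1 : ∀ b c : ℝ, HasDerivAt (fun t : ℝ => b + t * c) c t := by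
      intro b c
      simpa using ((hasDerivAt_id t).mul_const c).const_add b
    refine HasDerivAt.sub ?_ ?_
    · refine HasDerivAt.fun_sum fun i _ => HasDerivAt.fun_sum fun j _ => ?_
      have hpos : 0 < q j + t * p i := add_pos_of_pos_of_nonneg (hq j) (mul_nonneg ht (hp i))
      exact (((e1 (q j) (p i)).log hpos.ne').const_mul _).const_mul _
    · refine HasDerivAt.fun_sum fun k _ => ?_
      have hpos : 0 < a k + t * 1 := by have := hapos k; linarith
      have hi := (e1 (a k) 1).inv hpos.ne'
      have := ((((e1 (a k) 1).log hpos.ne').sub (hi.const_mul (a k))).const_mul (r k)).add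
        (hi.const_mul (s k))
      refine this.congr_deriv ?_
      rw [mul_one] at hpos ⊢
      field_simp
      ring
  have hmono : MonotoneOn G (Set.Ici 0) := by
    refine monotoneOn_of_deriv_nonneg (convex_Ici 0)
      (fun t ht => (hder t ht).continuousAt.continuousWithinAt)
      (fun t ht => (hder t (interior_subset ht)).differentiableAt.differentiableWithinAt) ?_
    intro t ht
    have ht' : 0 ≤ t := interior_subset ht
    rw [(hder t ht').deriv]
    exact sub_nonneg.mpr (hyp t ht' _)
  have hlim : Filter.Tendsto G Filter.atTop
      (nhds (∑ i, ∑ j, w i j * (p i * Real.log (p i)) - ∑ k : ι, (r k * (Real.log 1 - a k * 0) + s k * 0))) := by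
    have hi : ∀ k, Filter.Tendsto (fun t : ℝ => (a k + t * 1)⁻¹) Filter.atTop (nhds 0) := by
      intro k
      simp only [mul_one]
      exact Filter.Tendsto.inv_tendsto_atTop (Filter.tendsto_atTop_add_const_left _ _ Filter.tendsto_id)
    have h : Filter.Tendsto (fun t : ℝ => ∑ i, ∑ j, w i j * (p i * (Real.log (q j + t * p i) - Real.log t)) -
      ∑ k, (r k * ((Real.log (a k + t * 1) - Real.log t) - a k * (a k + t * 1)⁻¹) + s k * (a k + t * 1)⁻¹))
      Filter.atTop
      (nhds (∑ i, ∑ j, w i j * (p i * Real.log (p i)) - ∑ k : ι, (r k * (Real.log 1 - a k * 0) + s k * 0))) := by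
      refine Filter.Tendsto.sub ?_ ?_
      · refine tendsto_finsetSum _ fun i _ => tendsto_finsetSum _ fun j _ => ?_
        rcases (hp i).eq_or_lt with h0 | h0
        · simp [← h0]
        · exact ((vgt_log_tendsto _ _ h0).const_mul _).const_mul _
      · refine tendsto_finsetSum _ fun k _ => ?_
        exact (((vgt_log_tendsto _ _ one_pos).sub ((hi k).const_mul _)).const_mul _).add
          ((hi k).const_mul _)
    refine h.congr fun t => ?_
    have e1 : ∑ i, ∑ j, w i j * (p i * (Real.log (q j + t * p i) - Real.log t)) =
        ∑ i, ∑ j, w i j * (p i * Real.log (q j + t * p i)) - (∑ i, ∑ j, w i j * p i) * Real.log t := by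
      simp only [Finset.sum_mul, ← Finset.sum_sub_distrib]
      refine Finset.sum_congr rfl fun i _ => Finset.sum_congr rfl fun j _ => ?_
      ring
    have e2 : ∑ k, (r k * ((Real.log (a k + t * 1) - Real.log t) - a k * (a k + t * 1)⁻¹) + s k * (a k + t * 1)⁻¹)
        = ∑ k, (r k * (Real.log (a k + t * 1) - a k * (a k + t * 1)⁻¹) + s k * (a k + t * 1)⁻¹)
          - (∑ k, r k) * Real.log t := by
      simp only [Finset.sum_mul, ← Finset.sum_sub_distrib]
      refine Finset.sum_congr rfl fun i _ => ?_
      ring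
    rw [e1, e2, hw1, hr1, hG]
    ring
  have hfin : G 0 ≤ _ := ge_of_tendsto hlim (by
    filter_upwards [Filter.eventually_ge_atTop 0] with t ht
    exact hmono Set.self_mem_Ici ht ht)
  have e0 : G 0 = ∑ i, ∑ j, w i j * (p i * Real.log (q j)) +
      (∑ k, r k * y k + ∑ k, r k) - ∑ k, s k * Real.exp (y k) := by
    simp only [hG, zero_mul, add_zero]
    rw [← Finset.sum_add_distrib, add_sub_assoc, sub_eq_add_neg, ← Finset.sum_neg_distrib,
      ← Finset.sum_sub_distrib]
    congr 1
    refine Finset.sum_congr rfl fun k _ => ?_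
    rw [mul_inv_cancel₀ (hapos k).ne']
    have hl : Real.log (a k) = - y k := Real.log_exp _
    have hinv : (a k)⁻¹ = Real.exp (y k) := by simp [ha, Real.exp_neg]
    rw [hl, hinv]
    ring
  rw [e0, hr1] at hfin
  simp only [Real.log_one, mul_zero, sub_zero, add_zero, Finset.sum_const_zero] at hfin
  simp only [mul_sub, Finset.sum_sub_distrib]
  linarith

section
variable {n : ℕ}

lemma vgt_tr (A W : Matrix (Fin n) (Fin n) ℂ) (f : Fin n → ℝ) :
    ((A * (W * diagonal (fun k => (f k : ℂ)) * star W)).trace).re =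
      ∑ k, ((star W * A * W) k k).re * f k := by
  have : (A * (W * diagonal (fun k => (f k : ℂ)) * star W)).trace =
      ((star W * A * W) * diagonal (fun k => (f k : ℂ))).trace := by
    rw [← Matrix.mul_assoc, Matrix.trace_mul_comm]; simp only [Matrix.mul_assoc]
  rw [this, Matrix.trace, Complex.re_sum]
  refine Finset.sum_congr rfl fun k _ => ?_
  simp [Matrix.mul_diagonal]

lemma vgt_amgm (u m : ℂ) (p c : ℝ) (hc : 0 < c) :
    2 * (p * (star u * m).re) - c * Complex.normSq m ≤ Complex.normSq u * (p * (p / c)) := by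
  have : Complex.normSq u * (p * (p / c)) - (2 * (p * (star u * m).re) - c * Complex.normSq m)
    = ((p * u.re - c * m.re) ^ 2 + (p * u.im - c * m.im) ^ 2) / c := by
    simp [Complex.normSq_apply]
    field_simp
    ring
  have h2 : 0 ≤ ((p * u.re - c * m.re) ^ 2 + (p * u.im - c * m.im) ^ 2) / c := by positivity
  linarith

lemma vgt_diag (A : Matrix (Fin n) (Fin n) ℂ) (f : Fin n → ℝ) (B : Matrix (Fin n) (Fin n) ℂ) :
    ((A * B * diagonal (fun k => (f k : ℂ))).trace).re = ∑ i, ∑ j, f i * (A i j * B j i).re := by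
  rw [Matrix.trace, Complex.re_sum]
  refine Finset.sum_congr rfl fun i _ => ?_
  rw [Matrix.diag_apply, Matrix.mul_diagonal, Matrix.mul_apply, Complex.re_mul_ofReal,
    Complex.re_sum, Finset.sum_mul]
  refine Finset.sum_congr rfl fun j _ => ?_
  ring

lemma vgt_main (ρ σ U V W : Matrix (Fin n) (Fin n) ℂ) (p q y : Fin n → ℝ)
    (hU : star U * U = 1) (hU' : U * star U = 1) (hV' : V * star V = 1) (hV : star V * V = 1)
    (hW : star W * W = 1) (hW' : W * star W = 1)
    (hρ : ρ = U * diagonal (fun k => (p k : ℂ)) * star U)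
    (hσ : σ = V * diagonal (fun k => (q k : ℂ)) * star V)
    (hp : ∀ i, 0 ≤ p i) (hq : ∀ i, 0 < q i) (htr : ρ.trace = 1) :
    ∑ k, ((star W * ρ * W) k k).re * y k + 1 ≤
      ((ρ * (U * diagonal (fun k => (Real.log (p k) : ℂ)) * star U -
         V * diagonal (fun k => (Real.log (q k) : ℂ)) * star V)).trace).re +
      ∑ k, ((star W * σ * W) k k).re * Real.exp (y k) := by
  set u : Matrix (Fin n) (Fin n) ℂ := star V * U with hu
  have huu : star u * u = 1 := by
    simp only [hu, star_mul, star_star]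
    rw [Matrix.mul_assoc, ← Matrix.mul_assoc V, hV', Matrix.one_mul, hU]
  have hcol : ∀ i, ∑ j, Complex.normSq (u j i) = 1 := by
    intro i
    have := congrArg Complex.re (congrFun (congrFun huu i) i)
    simp only [Matrix.mul_apply, Complex.re_sum, Matrix.star_apply, Matrix.one_apply_eq, Complex.one_re] at this
    rw [← this]
    refine Finset.sum_congr rfl fun j _ => ?_
    simp [Complex.normSq_apply]
  have hpsum : ∑ i, p i = 1 := by
    have := congrArg Complex.re htr
    rw [hρ, Matrix.trace_mul_comm, ← Matrix.mul_assoc, hU, Matrix.one_mul] at this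
    simpa [Matrix.trace] using this
  have hr1 : ∑ k, ((star W * ρ * W) k k).re = 1 := by
    have := congrArg Complex.re htr
    rw [← Matrix.one_mul ρ, ← hW', Matrix.mul_assoc, Matrix.trace_mul_comm, Matrix.trace, Complex.re_sum] at this
    simpa using this
  have hD : ((ρ * (U * diagonal (fun k => (Real.log (p k) : ℂ)) * star U -
         V * diagonal (fun k => (Real.log (q k) : ℂ)) * star V)).trace).re =
      ∑ i, ∑ j, Complex.normSq (u j i) * (p i * (Real.log (p i) - Real.log (q j))) := by
    rw [Matrix.mul_sub, Matrix.trace_sub, Complex.sub_re, vgt_tr, vgt_tr]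
    have a1 : star U * ρ * U = diagonal (fun k => (p k : ℂ)) := by
      rw [hρ]
      calc _ = (star U * U) * diagonal (fun k => (p k : ℂ)) * (star U * U) := by
            simp only [Matrix.mul_assoc]
        _ = _ := by rw [hU]; simp
    have a2 : star V * ρ * V = u * diagonal (fun k => (p k : ℂ)) * star u := by
      rw [hρ, hu]; simp only [star_mul, star_star, Matrix.mul_assoc]
    rw [a1, a2]
    simp only [mul_sub, Finset.sum_sub_distrib]
    congr 1
    · refine Finset.sum_congr rfl fun i _ => ?_
      rw [← Finset.sum_mul, hcol]; simp
    · rw [Finset.sum_comm]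
      refine Finset.sum_congr rfl fun j _ => ?_
      rw [Matrix.mul_apply, Complex.re_sum, Finset.sum_mul]
      refine Finset.sum_congr rfl fun i _ => ?_
      simp [Matrix.mul_diagonal, Complex.normSq_apply]
      ring
  rw [hD]
  refine vgt_real (fun i j => Complex.normSq (u j i)) p q _ _ y hp hq ?_ hr1 ?_
  · simp only [← Finset.sum_mul, hcol, one_mul, hpsum]
  intro t ht κ
  set K : Matrix (Fin n) (Fin n) ℂ := W * diagonal (fun k => (κ k : ℂ)) * star W with hK
  have hKs : star K = K := by
    simp only [hK, star_mul, star_star, Matrix.mul_assoc]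
    congr 2
    ext i j
    by_cases h : i = j
    · subst h; simp
    · simp [h, Ne.symm h]
  have hKK : K * K = W * diagonal (fun k => ((κ k ^ 2 : ℝ) : ℂ)) * star W := by
    calc K * K = W * diagonal (fun k => (κ k : ℂ)) * (star W * W) * diagonal (fun k => (κ k : ℂ)) * star W := by
          simp only [hK, Matrix.mul_assoc]
      _ = _ := by
          rw [hW, Matrix.mul_one, Matrix.mul_assoc W, Matrix.diagonal_mul_diagonal]
          simp [pow_two]
  set M : Matrix (Fin n) (Fin n) ℂ := star V * K * U with hM
  have hMs : star M = star U * K * V := by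
    simp only [hM, star_mul, star_star, hKs, Matrix.mul_assoc]
  have b1 : ((ρ * K).trace).re = ∑ i, ∑ j, p i * (star (u j i) * M j i).re := by
    have : (ρ * K).trace = (star u * M * diagonal (fun k => (p k : ℂ))).trace := by
      rw [hρ, Matrix.mul_assoc, Matrix.mul_assoc, Matrix.trace_mul_comm, Matrix.mul_assoc,
        Matrix.trace_mul_comm]
      have : star u * M = star U * K * U := by
        rw [hu, hM]
        calc _ = star U * (V * star V) * K * U := by simp only [star_mul, star_star, Matrix.mul_assoc]
          _ = _ := by rw [hV', Matrix.mul_one]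
      rw [this]
    rw [this, vgt_diag]; rfl
  have b2 : ((ρ * (K * K)).trace).re = ∑ i, ∑ j, p i * Complex.normSq (M j i) := by
    have : (ρ * (K * K)).trace = (star M * M * diagonal (fun k => (p k : ℂ))).trace := by
      rw [hρ, Matrix.mul_assoc, Matrix.mul_assoc, Matrix.trace_mul_comm, Matrix.mul_assoc,
        Matrix.trace_mul_comm]
      have : star M * M = star U * (K * K) * U := by
        rw [hMs, hM]
        calc _ = star U * K * (V * star V) * K * U := by simp only [Matrix.mul_assoc]
          _ = _ := by rw [hV', Matrix.mul_one]; simp only [Matrix.mul_assoc]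
      rw [this]
    rw [this, vgt_diag]
    refine Finset.sum_congr rfl fun i _ => Finset.sum_congr rfl fun j _ => ?_
    simp [Complex.normSq_apply]
  have b3 : ((σ * (K * K)).trace).re = ∑ i, ∑ j, q j * Complex.normSq (M j i) := by
    have : (σ * (K * K)).trace = (M * star M * diagonal (fun k => (q k : ℂ))).trace := by
      rw [hσ, Matrix.mul_assoc, Matrix.mul_assoc, Matrix.trace_mul_comm, Matrix.mul_assoc,
        Matrix.trace_mul_comm]
      have : M * star M = star V * (K * K) * V := by
        rw [hMs, hM]
        calc _ = star V * K * (U * star U) * K * V := by simp only [Matrix.mul_assoc]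
          _ = _ := by rw [hU', Matrix.mul_one]; simp only [Matrix.mul_assoc]
      rw [this]
    rw [this, vgt_diag, Finset.sum_comm]
    refine Finset.sum_congr rfl fun i _ => Finset.sum_congr rfl fun j _ => ?_
    simp [Complex.normSq_apply]
  have b4 : ∑ k, (2 * ((star W * ρ * W) k k).re * κ k - κ k ^ 2 *
      (((star W * σ * W) k k).re + t * ((star W * ρ * W) k k).re)) =
      2 * ((ρ * K).trace).re - ((σ * (K * K)).trace).re - t * ((ρ * (K * K)).trace).re := by
    rw [hKK, vgt_tr, vgt_tr, vgt_tr]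
    simp only [Finset.mul_sum, ← Finset.sum_sub_distrib]
    refine Finset.sum_congr rfl fun k _ => ?_
    ring
  rw [b4, b1, b2, b3]
  simp only [Finset.mul_sum, ← Finset.sum_sub_distrib]
  refine Finset.sum_le_sum fun i _ => Finset.sum_le_sum fun j _ => ?_
  have := vgt_amgm (u j i) (M j i) (p i) (q j + t * p i)
    (add_pos_of_pos_of_nonneg (hq j) (mul_nonneg ht (hp i)))
  linarith

lemma vgt_cfc (A : Matrix (Fin n) (Fin n) ℂ) (hA : A.IsHermitian) (f : ℝ → ℝ) :
    cfc f A = (hA.eigenvectorUnitary : Matrix (Fin n) (Fin n) ℂ) * diagonal (fun k => (f (hA.eigenvalues k) : ℂ)) *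
      star (hA.eigenvectorUnitary : Matrix (Fin n) (Fin n) ℂ) := by
  rw [hA.cfc_eq, Matrix.IsHermitian.cfc]
  rfl

lemma vgt_spec (A : Matrix (Fin n) (Fin n) ℂ) (hA : A.IsHermitian) :
    A = (hA.eigenvectorUnitary : Matrix (Fin n) (Fin n) ℂ) * diagonal (fun k => (hA.eigenvalues k : ℂ)) *
      star (hA.eigenvectorUnitary : Matrix (Fin n) (Fin n) ℂ) := by
  conv_lhs => rw [hA.spectral_theorem]
  rfl

end

/-- Variational formula combined with Golden–Thompson:
`tr(ρX) ≤ (1/λ)D(ρ‖σ) + (1/λ) log tr(σ e^{λX})`. -/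
theorem variational_golden_thompson {n : ℕ} (ρ σ X : Matrix (Fin n) (Fin n) ℂ)
    (hρ : ρ.PosSemidef) (hρtr : ρ.trace = 1)
    (hσ : σ.PosDef) (hσtr : σ.trace = 1)
    (hX : X.IsHermitian) (l : ℝ) (hl : 0 < l) :
    ((ρ * X).trace).re ≤
      (1 / l) * relEnt ρ σ +
        (1 / l) * Real.log (((σ * mexp ((l : ℂ) • X)).trace).re) := by
  have hY : ((l : ℂ) • X).IsHermitian := by
    rw [Matrix.IsHermitian, Matrix.conjTranspose_smul, hX.eq]; simp
  have hlX : l * ((ρ * X).trace).re = ((ρ * ((l : ℂ) • X)).trace).re := by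
    simp [Matrix.trace_smul]
  generalize (l : ℂ) • X = Y at hY hlX ⊢
  set W : Matrix (Fin n) (Fin n) ℂ := (hY.eigenvectorUnitary : Matrix (Fin n) (Fin n) ℂ) with hWdef
  set y := hY.eigenvalues with hy
  have h1 := vgt_spec Y hY
  have hW : star W * W = 1 := Unitary.coe_star_mul_self hY.eigenvectorUnitary
  have hW' : W * star W = 1 := Unitary.coe_mul_star_self hY.eigenvectorUnitary
  have hZ : ((σ * mexp Y).trace).re = ∑ k, ((star W * σ * W) k k).re * Real.exp (y k) := by
    rw [mexp, vgt_cfc Y hY, vgt_tr]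
  have hR : ((ρ * Y).trace).re = ∑ k, ((star W * ρ * W) k k).re * y k := by
    conv_lhs => rw [h1]
    rw [vgt_tr]
  have hr1 : ∑ k, ((star W * ρ * W) k k).re = 1 := by
    have := congrArg Complex.re hρtr
    rw [← Matrix.one_mul ρ, ← hW', Matrix.mul_assoc, Matrix.trace_mul_comm, Matrix.trace, Complex.re_sum] at this
    simpa using this
  have hne : Nonempty (Fin n) := by
    by_contra h
    rw [not_nonempty_iff] at h
    simp [Matrix.trace] at hρtr
  have hpos : (star W * σ * W).PosDef := by
    refine hσ.conjTranspose_mul_mul_same ?_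
    intro v w hvw
    have := congrArg (fun z => star W *ᵥ z) hvw
    simpa [Matrix.mulVec_mulVec, hW] using this
  set Z := ((σ * mexp Y).trace).re with hZdef
  have hZpos : 0 < Z := by
    rw [hZ]
    refine Finset.sum_pos (fun k _ => mul_pos ?_ (Real.exp_pos _)) Finset.univ_nonempty
    exact (Complex.lt_def.mp (hpos.diag_pos (i := k))).1
  have key := vgt_main ρ σ _ _ W _ _ (fun k => y k - Real.log Z)
    (Unitary.coe_star_mul_self hρ.1.eigenvectorUnitary)
    (Unitary.coe_mul_star_self hρ.1.eigenvectorUnitary)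
    (Unitary.coe_mul_star_self hσ.1.eigenvectorUnitary)
    (Unitary.coe_star_mul_self hσ.1.eigenvectorUnitary) hW hW'
    (vgt_spec ρ hρ.1) (vgt_spec σ hσ.1) hρ.eigenvalues_nonneg hσ.eigenvalues_pos hρtr
  rw [← vgt_cfc ρ hρ.1, ← vgt_cfc σ hσ.1] at key
  have e1 : ∑ k, ((star W * ρ * W) k k).re * (y k - Real.log Z) = l * ((ρ * X).trace).re - Real.log Z := by
    rw [hlX, hR]
    simp only [mul_sub, Finset.sum_sub_distrib, ← Finset.sum_mul, hr1, one_mul]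
  have e2 : ∑ k, ((star W * σ * W) k k).re * Real.exp (y k - Real.log Z) = 1 := by
    simp only [Real.exp_sub, Real.exp_log hZpos, ← mul_div_assoc, ← Finset.sum_div]
    rw [← hZ, div_self hZpos.ne']
  rw [e1, e2] at key
  have key2 : l * ((ρ * X).trace).re ≤ relEnt ρ σ + Real.log Z := by
    rw [relEnt, mlog, mlog]; linarith
  rw [← mul_add, one_div, ← div_eq_inv_mul, le_div_iff₀ hl]
  linarith
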